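/- Let L ≥ 1 and suppose R_max ≥ 1 and A_max ≥ 1. If a strategy profile π of a finite discounted stochastic game satisfies ‖f(π) − π‖∞ ≤ (1−γ)⁵/(32 A_max³ R_max³ L²), then π is a 1/L-approximate Markov perfect equilibrium. -/

import Mathlib

/-!
Fix an agent and a state, write `u = 1 - γ`, and let `adv b` be the gain from playing the action `b`
once and returning to `π` afterwards. The gain `D b` of playing `b` at every visit satisfies
`max 0 (adv b) ≤ D b ≤ max 0 (adv b) / u`. If `f` moves `π` little, then `D b` is close to
`π b * ∑ D`, so a large `∑ D` would make `π` put nearly all its mass on actions of positive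
advantage, nearly in proportion to their gains. But the advantages average to zero under `π`; hence
`∑ D`, and with it every advantage, is small. A strategy that gains at most `c` in each step gains
at most `c / u` in total.
-/

open Finset

/-- A finite discounted stochastic game with `n` agents, `S` states and
action counts `A i` for each agent `i`. -/
structure SG (n S : ℕ) (A : Fin n → ℕ) where
  P : Fin S → (∀ i, Fin (A i)) → Fin S → ℝ
  r : Fin n → Fin S → (∀ i, Fin (A i)) → ℝ
  Rmax : ℝ
  γ : ℝ
  P_nonneg : ∀ s a s', 0 ≤ P s a s'
  P_sum_one : ∀ s a, ∑ s', P s a s' = 1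
  r_nonneg : ∀ i s a, 0 ≤ r i s a
  r_le_Rmax : ∀ i s a, r i s a ≤ Rmax
  γ_nonneg : 0 ≤ γ
  γ_lt_one : γ < 1

namespace SG

variable {n S : ℕ} {A : Fin n → ℕ}

/-- A (behavioral) strategy profile: agent `i` plays at state `s` the distribution
`π i s` on its actions. -/
abbrev Profile (n S : ℕ) (A : Fin n → ℕ) := ∀ i : Fin n, Fin S → Fin (A i) → ℝ

/-- `π` is a genuine strategy profile: each `π i s` is a probability distribution. -/
def IsProfile (π : Profile n S A) : Prop :=
  (∀ i s a, 0 ≤ π i s a) ∧ ∀ i s, ∑ a, π i s a = 1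

/-- `A_max`, the largest number of actions of any agent. -/
def Amax (A : Fin n → ℕ) : ℕ := Finset.univ.sup A

/-- Probability of the joint action `a` at state `s` under profile `π`. -/
def jointProb (π : Profile n S A) (s : Fin S) (a : ∀ i, Fin (A i)) : ℝ :=
  ∏ i, π i s (a i)

/-- The state-transition matrix `P^π` induced by the profile `π`. -/
noncomputable def Pmat (g : SG n S A) (π : Profile n S A) : Matrix (Fin S) (Fin S) ℝ :=
  fun s s' => ∑ a, jointProb π s a * g.P s a s'

/-- Expected one-step reward `r^{i,π}(s)` of agent `i` at state `s` under `π`. -/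
noncomputable def rvec (g : SG n S A) (π : Profile n S A) (i : Fin n) (s : Fin S) : ℝ :=
  ∑ a, jointProb π s a * g.r i s a

/-- The value function `V^{π^i,π^{-i}}` of agent `i` under profile `π`: the unique
solution of the Bellman equation `V = r^{i,π} + γ P^π V`, i.e. `(I − γP^π)⁻¹ r^{i,π}`. -/
noncomputable def V (g : SG n S A) (π : Profile n S A) (i : Fin n) : Fin S → ℝ :=
  Matrix.mulVec (1 - g.γ • g.Pmat π)⁻¹ (g.rvec π i)

/-- The profile obtained from `π` by letting agent `i` play the pure action `a`
at state `s` (and `π i` at every other state). -/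
def devProfile (π : Profile n S A) (i : Fin n) (s : Fin S) (a : Fin (A i)) : Profile n S A :=
  Function.update π i (fun t b => if t = s then (if b = a then (1 : ℝ) else 0) else π i t b)

/-- The one-step-deviation value `V^{π^i,π^{-i}}_{π^i(s,a)=1}(s)`. -/
noncomputable def Vdev (g : SG n S A) (π : Profile n S A) (i : Fin n) (s : Fin S)
    (a : Fin (A i)) : ℝ :=
  g.V (devProfile π i s a) i s

/-- `D^{π}_{a}(s) = max(0, V^{π^i,π^{-i}}_{π^i(s,a)=1}(s) − V^{π^i,π^{-i}}(s))`. -/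
noncomputable def D (g : SG n S A) (π : Profile n S A) (i : Fin n) (s : Fin S)
    (a : Fin (A i)) : ℝ :=
  max 0 (g.Vdev π i s a - g.V π i s)

/-- Nash's improvement map `f` on strategy profiles. -/
noncomputable def f (g : SG n S A) (π : Profile n S A) : Profile n S A :=
  fun i s a => (π i s a + g.D π i s a) / (1 + ∑ b, g.D π i s b)

/-- `π` is a Markov perfect equilibrium: no agent can improve its value at any state
by unilaterally switching to another behavioral strategy. -/
def IsMPE (g : SG n S A) (π : Profile n S A) : Prop :=
  ∀ (s : Fin S) (i : Fin n) (σ : Fin S → Fin (A i) → ℝ),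
    ((∀ t b, 0 ≤ σ t b) ∧ ∀ t, ∑ b, σ t b = 1) →
    g.V (Function.update π i σ) i s ≤ g.V π i s

/-- `π` is an `ε`-approximate Markov perfect equilibrium. -/
def IsApproxMPE (g : SG n S A) (π : Profile n S A) (ε : ℝ) : Prop :=
  ∀ (s : Fin S) (i : Fin n) (σ : Fin S → Fin (A i) → ℝ),
    ((∀ t b, 0 ≤ σ t b) ∧ ∀ t, ∑ b, σ t b = 1) →
    g.V (Function.update π i σ) i s - ε ≤ g.V π i s

end SG

section StdSimplex

variable {ι 𝕜 : Type*} [Fintype ι] [Field 𝕜] [LinearOrder 𝕜] [IsStrictOrderedRing 𝕜]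
  {p x : ι → 𝕜} {c : 𝕜}

lemma sum_mul_le_of_mem_stdSimplex (hp : p ∈ stdSimplex 𝕜 ι) (hx : ∀ b, x b ≤ c) :
    ∑ b, p b * x b ≤ c :=
  (convex_Iic c).sum_mem (fun b _ ↦ hp.1 b) hp.2 fun b _ ↦ hx b

end StdSimplex

section RowStochastic

open Matrix

variable {ι 𝕜 : Type*} [Fintype ι] [DecidableEq ι] [Field 𝕜] [LinearOrder 𝕜]
  [IsStrictOrderedRing 𝕜] {M : Matrix ι ι 𝕜} {γ : 𝕜}

lemma le_div_one_sub_of_le_mulVec {x : ι → 𝕜} {c : 𝕜} (hM : M ∈ rowStochastic 𝕜 ι)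
    (hγ₀ : 0 ≤ γ) (hγ₁ : γ < 1) (hx : ∀ s, x s ≤ γ * (M *ᵥ x) s + c) (s : ι) :
    x s ≤ c / (1 - γ) := by
  have : Nonempty ι := ⟨s⟩
  obtain ⟨m, hm⟩ := Finite.exists_max x
  have hrow : M m ∈ stdSimplex 𝕜 ι :=
    ⟨fun _ ↦ nonneg_of_mem_rowStochastic hM, sum_row_of_mem_rowStochastic hM m⟩
  have hmean : (M *ᵥ x) m ≤ x m := sum_mul_le_of_mem_stdSimplex hrow hm
  refine (hm s).trans ?_
  rw [le_div_iff₀ (sub_pos.2 hγ₁)]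
  linarith [hx m, mul_le_mul_of_nonneg_left hmean hγ₀]

lemma isUnit_one_sub_smul_of_mem_rowStochastic (hM : M ∈ rowStochastic 𝕜 ι)
    (hγ₀ : 0 ≤ γ) (hγ₁ : γ < 1) : IsUnit (1 - γ • M) := by
  have hle : ∀ v w, (1 - γ • M) *ᵥ v = (1 - γ • M) *ᵥ w → v ≤ w := by
    intro v w hvw s
    have hfix : ∀ t, (v - w) t ≤ γ * (M *ᵥ (v - w)) t + 0 := by
      intro t
      have ht := congrFun hvw t
      simp only [sub_mulVec, one_mulVec, smul_mulVec, Pi.sub_apply, Pi.smul_apply,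
        smul_eq_mul] at ht
      simp only [mulVec_sub, Pi.sub_apply]
      linarith
    simpa using le_div_one_sub_of_le_mulVec hM hγ₀ hγ₁ hfix s
  exact mulVec_injective_iff_isUnit.1 fun v w hvw ↦
    le_antisymm (hle v w hvw) (hle w v hvw.symm)

end RowStochastic

section OrderedField

variable {𝕜 : Type*} [Field 𝕜] [LinearOrder 𝕜] [IsStrictOrderedRing 𝕜]

lemma abs_sub_mul_le_of_abs_div_sub_le {p d T δ : 𝕜} (hT : 0 ≤ T)
    (h : |(p + d) / (1 + T) - p| ≤ δ) : |d - p * T| ≤ (1 + T) * δ := by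
  have hpos : 0 < 1 + T := by linarith
  have hdiv : (p + d) / (1 + T) - p = (d - p * T) / (1 + T) := by
    field_simp
    ring
  rwa [hdiv, abs_div, abs_of_pos hpos, div_le_iff₀' hpos] at h

lemma mul_sq_sub_le_mul_of_abs_sub_mul_le {u K e T p w d : 𝕜} (hu : 0 < u) (hK : 0 ≤ K)
    (hT : 0 ≤ T) (hp : 0 ≤ p) (hw : -K ≤ w) (hd : 0 ≤ d) (hdw : d * u ≤ max 0 w)
    (h : |d - p * T| ≤ e) : u * (d ^ 2 - e * d) - K * e ≤ T * (p * w) := by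
  have hpT : 0 ≤ p * T := mul_nonneg hp hT
  have he : 0 ≤ e := (abs_nonneg _).trans h
  obtain ⟨hlow, hupp⟩ := abs_le.1 h
  rcases le_total w 0 with hw₀ | hw₀
  · rw [max_eq_left hw₀] at hdw
    obtain rfl : d = 0 := hd.antisymm' (nonpos_of_mul_nonpos_left hdw hu)
    have hmass : p * T * K ≤ e * K := mul_le_mul_of_nonneg_right (by linarith) hK
    linarith [mul_le_mul_of_nonneg_left hw hpT]
  · rw [max_eq_right hw₀] at hdw
    have hmass : (d - e) * (d * u) ≤ p * T * (d * u) :=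
      mul_le_mul_of_nonneg_right (by linarith) (mul_nonneg hd hu.le)
    linarith [mul_le_mul_of_nonneg_left hdw hpT, mul_nonneg hK he]

end OrderedField

lemma le_add_sqrt_of_sq_le {x a b : ℝ} (ha : 0 ≤ a) (h : x ^ 2 ≤ a * x + b) : x ≤ a + √b := by
  rcases le_total x a with hxa | hax
  · exact hxa.trans (le_add_of_nonneg_right (Real.sqrt_nonneg b))
  · have hsq : (x - a) ^ 2 ≤ b := by nlinarith
    linarith [Real.le_sqrt_of_sq_le hsq]

lemma sum_le_of_abs_sub_mul_sum_le {ι : Type*} [Fintype ι] {p w d : ι → ℝ} {u K e : ℝ}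
    (hu : 0 < u) (hK : 0 ≤ K) (he : 0 ≤ e) (hp : ∀ b, 0 ≤ p b) (hpw : ∑ b, p b * w b = 0)
    (hw : ∀ b, -K ≤ w b) (hd : ∀ b, 0 ≤ d b) (hdw : ∀ b, d b * u ≤ max 0 (w b))
    (h : ∀ b, |d b - p b * ∑ c, d c| ≤ e) :
    ∑ b, d b ≤ Fintype.card ι * (e + √(K * e / u)) := by
  set T := ∑ b, d b
  set N := (Fintype.card ι : ℝ)
  have hN : 0 ≤ N := Nat.cast_nonneg _
  have hT : 0 ≤ T := Finset.sum_nonneg fun b _ ↦ hd b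
  have hsum : u * (∑ b, d b ^ 2 - e * T) ≤ N * (K * e) := by
    have hle : ∑ b, (u * (d b ^ 2 - e * d b) - K * e) ≤ ∑ b, T * (p b * w b) :=
      Finset.sum_le_sum fun b _ ↦ mul_sq_sub_le_mul_of_abs_sub_mul_le hu hK hT (hp b) (hw b)
        (hd b) (hdw b) (h b)
    rw [← Finset.mul_sum, hpw, mul_zero, Finset.sum_sub_distrib, ← Finset.mul_sum,
      Finset.sum_sub_distrib, ← Finset.mul_sum, Finset.sum_const, Finset.card_univ,
      nsmul_eq_mul] at hle
    linarith
  have hquad : T ^ 2 ≤ N * e * T + N ^ 2 * (K * e / u) := by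
    have hdiv : ∑ b, d b ^ 2 ≤ e * T + N * (K * e / u) := by
      rw [← sub_le_iff_le_add', ← mul_div_assoc, le_div_iff₀' hu]
      exact hsum
    calc T ^ 2 ≤ N * ∑ b, d b ^ 2 := sq_sum_le_card_mul_sum_sq
      _ ≤ N * (e * T + N * (K * e / u)) := mul_le_mul_of_nonneg_left hdiv hN
      _ = N * e * T + N ^ 2 * (K * e / u) := by ring
  calc T ≤ N * e + √(N ^ 2 * (K * e / u)) := le_add_sqrt_of_sq_le (mul_nonneg hN he) hquad
    _ = N * (e + √(K * e / u)) := by rw [Real.sqrt_mul (sq_nonneg N), Real.sqrt_sq hN, mul_add]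

namespace SG

open Matrix

variable {n S : ℕ} {A : Fin n → ℕ} (g : SG n S A) {π : Profile n S A} {i : Fin n}
  {σ : Fin S → Fin (A i) → ℝ}

lemma one_sub_γ_pos : 0 < 1 - g.γ := sub_pos.2 g.γ_lt_one

lemma jointProb_mem_stdSimplex (hπ : IsProfile π) (s : Fin S) :
    jointProb π s ∈ stdSimplex ℝ (∀ i, Fin (A i)) := by
  refine ⟨fun a ↦ Finset.prod_nonneg fun i _ ↦ hπ.1 i s (a i), ?_⟩
  calc ∑ a, jointProb π s a = ∏ i, ∑ b, π i s b := (Fintype.prod_sum fun i b ↦ π i s b).symm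
    _ = 1 := Finset.prod_eq_one fun i _ ↦ hπ.2 i s

lemma Pmat_mem_rowStochastic (hπ : IsProfile π) : g.Pmat π ∈ rowStochastic ℝ (Fin S) := by
  refine mem_rowStochastic_iff_sum.2 ⟨fun s t ↦ Finset.sum_nonneg fun a _ ↦
    mul_nonneg ((jointProb_mem_stdSimplex hπ s).1 a) (g.P_nonneg s a t), fun s ↦ ?_⟩
  simp only [Pmat]
  rw [Finset.sum_comm]
  simp_rw [← Finset.mul_sum, g.P_sum_one, mul_one, (jointProb_mem_stdSimplex hπ s).2]

lemma rvec_nonneg (hπ : IsProfile π) (i : Fin n) (s : Fin S) : 0 ≤ g.rvec π i s :=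
  Finset.sum_nonneg fun a _ ↦ mul_nonneg ((jointProb_mem_stdSimplex hπ s).1 a) (g.r_nonneg i s a)

lemma rvec_le (hπ : IsProfile π) (i : Fin n) (s : Fin S) : g.rvec π i s ≤ g.Rmax :=
  sum_mul_le_of_mem_stdSimplex (jointProb_mem_stdSimplex hπ s) (g.r_le_Rmax i s)

/-- The Bellman operator `v ↦ r^{i,π} + γ P^π v` of agent `i` under the profile `π`. -/
noncomputable def bellman (π : Profile n S A) (i : Fin n) (v : Fin S → ℝ) (s : Fin S) : ℝ :=
  g.rvec π i s + g.γ * (g.Pmat π *ᵥ v) s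

lemma bellman_eq_sum_jointProb (π : Profile n S A) (i : Fin n) (v : Fin S → ℝ) (s : Fin S) :
    g.bellman π i v s = ∑ a, jointProb π s a * (g.r i s a + g.γ * ∑ t, g.P s a t * v t) := by
  simp only [bellman, rvec, Pmat, mulVec, dotProduct, mul_add, Finset.sum_add_distrib,
    Finset.sum_mul, Finset.mul_sum]
  rw [Finset.sum_comm]
  congr! 3
  ring

lemma bellman_V (hπ : IsProfile π) (i : Fin n) : g.bellman π i (g.V π i) = g.V π i := by
  have hunit := isUnit_one_sub_smul_of_mem_rowStochastic (g.Pmat_mem_rowStochastic hπ)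
    g.γ_nonneg g.γ_lt_one
  have hsolve : (1 - g.γ • g.Pmat π) *ᵥ g.V π i = g.rvec π i := by
    rw [V, mulVec_mulVec, mul_nonsing_inv _ ((isUnit_iff_isUnit_det _).1 hunit), one_mulVec]
  funext s
  rw [bellman, ← hsolve, sub_mulVec, one_mulVec, smul_mulVec]
  exact sub_add_cancel _ _

lemma V_sub_eq (hπ : IsProfile π) (i : Fin n) (v : Fin S → ℝ) (s : Fin S) :
    g.V π i s - v s
      = g.γ * (g.Pmat π *ᵥ (g.V π i - v)) s + (g.bellman π i v s - v s) := by
  have hV := congrFun (g.bellman_V hπ i) s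
  simp only [bellman, mulVec_sub, Pi.sub_apply] at hV ⊢
  linarith

lemma V_le_add_div_of_bellman_le {v : Fin S → ℝ} {c : ℝ} (hπ : IsProfile π)
    (h : ∀ s, g.bellman π i v s ≤ v s + c) (s : Fin S) : g.V π i s ≤ v s + c / (1 - g.γ) := by
  have hstep : ∀ t, (g.V π i - v) t ≤ g.γ * (g.Pmat π *ᵥ (g.V π i - v)) t + c := fun t ↦ by
    rw [Pi.sub_apply, g.V_sub_eq hπ]
    linarith [h t]
  exact sub_le_iff_le_add'.1
    (le_div_one_sub_of_le_mulVec (g.Pmat_mem_rowStochastic hπ) g.γ_nonneg g.γ_lt_one hstep s)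

lemma le_V_of_le_bellman {v : Fin S → ℝ} (hπ : IsProfile π) (h : ∀ s, v s ≤ g.bellman π i v s) :
    v ≤ g.V π i := by
  intro s
  have hstep : ∀ t, (v - g.V π i) t ≤ g.γ * (g.Pmat π *ᵥ (v - g.V π i)) t + 0 := fun t ↦ by
    rw [← neg_sub (g.V π i) v, mulVec_neg, Pi.neg_apply, Pi.neg_apply, Pi.sub_apply,
      g.V_sub_eq hπ]
    linarith [h t]
  simpa using
    le_div_one_sub_of_le_mulVec (g.Pmat_mem_rowStochastic hπ) g.γ_nonneg g.γ_lt_one hstep s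

lemma V_nonneg (hπ : IsProfile π) (i : Fin n) : 0 ≤ g.V π i :=
  g.le_V_of_le_bellman hπ fun s ↦ by simpa [bellman] using g.rvec_nonneg hπ i s

lemma V_le (hπ : IsProfile π) (i : Fin n) (s : Fin S) : g.V π i s ≤ g.Rmax / (1 - g.γ) := by
  simpa using g.V_le_add_div_of_bellman_le (v := 0) hπ
    (fun s ↦ by simpa [bellman] using g.rvec_le hπ i s) s

lemma isProfile_update (hπ : IsProfile π) (hσ : ∀ t, σ t ∈ stdSimplex ℝ (Fin (A i))) :
    IsProfile (Function.update π i σ) := by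
  have hmem : ∀ j s, Function.update π i σ j s ∈ stdSimplex ℝ (Fin (A j)) := by
    intro j s
    rcases eq_or_ne j i with rfl | hj
    · simpa only [Function.update_self] using hσ s
    · simpa only [Function.update_of_ne hj] using ⟨hπ.1 j s, hπ.2 j s⟩
  exact ⟨fun j s ↦ (hmem j s).1, fun j s ↦ (hmem j s).2⟩

lemma isProfile_devProfile (hπ : IsProfile π) (i : Fin n) (s : Fin S) (b : Fin (A i)) :
    IsProfile (devProfile π i s b) := by
  refine isProfile_update hπ fun t ↦ ?_
  rcases eq_or_ne t s with rfl | ht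
  · refine ⟨fun c ↦ ?_, by simp⟩
    simp only [if_true]
    split_ifs <;> norm_num
  · simpa [ht] using ⟨hπ.1 i t, hπ.2 i t⟩

lemma jointProb_update (π : Profile n S A) (i : Fin n) (σ : Fin S → Fin (A i) → ℝ) (s : Fin S)
    (a : ∀ i, Fin (A i)) :
    jointProb (Function.update π i σ) s a = σ s (a i) * ∏ j ∈ univ.erase i, π j s (a j) := by
  rw [jointProb, ← Finset.mul_prod_erase _ _ (Finset.mem_univ i), Function.update_self]
  congr 1
  refine Finset.prod_congr rfl fun j hj ↦ ?_
  rw [Function.update_of_ne (Finset.ne_of_mem_erase hj)]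

lemma jointProb_update_eq_sum_devProfile (π : Profile n S A) (i : Fin n)
    (σ : Fin S → Fin (A i) → ℝ) (s : Fin S) (a : ∀ i, Fin (A i)) :
    jointProb (Function.update π i σ) s a
      = ∑ b, σ s b * jointProb (devProfile π i s b) s a := by
  simp [devProfile, jointProb_update]

lemma bellman_update_eq_sum_devProfile (π : Profile n S A) (i : Fin n)
    (σ : Fin S → Fin (A i) → ℝ) (v : Fin S → ℝ) (s : Fin S) :
    g.bellman (Function.update π i σ) i v s
      = ∑ b, σ s b * g.bellman (devProfile π i s b) i v s := by
  simp_rw [bellman_eq_sum_jointProb, jointProb_update_eq_sum_devProfile, Finset.sum_mul, mul_assoc]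
  rw [Finset.sum_comm]
  simp_rw [← Finset.mul_sum]

lemma bellman_devProfile_of_ne (π : Profile n S A) (i : Fin n) (v : Fin S → ℝ) {s t : Fin S}
    (hts : t ≠ s) (b : Fin (A i)) :
    g.bellman (devProfile π i s b) i v t = g.bellman π i v t := by
  conv_rhs => rw [← Function.update_eq_self i π]
  simp only [devProfile, bellman_eq_sum_jointProb, jointProb_update, if_neg hts]

/-- The advantage of action `b` for agent `i` at state `s`: the gain from playing `b` for one step
and following `π` from then on. -/
noncomputable def adv (π : Profile n S A) (i : Fin n) (s : Fin S) (b : Fin (A i)) : ℝ :=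
  g.bellman (devProfile π i s b) i (g.V π i) s - g.V π i s

lemma sum_mul_adv_eq_zero (hπ : IsProfile π) (i : Fin n) (s : Fin S) :
    ∑ b, π i s b * g.adv π i s b = 0 := by
  simp_rw [adv, mul_sub, Finset.sum_sub_distrib, ← Finset.sum_mul, hπ.2 i s,
    ← bellman_update_eq_sum_devProfile, Function.update_eq_self, g.bellman_V hπ, one_mul, sub_self]

lemma neg_le_adv (hπ : IsProfile π) (i : Fin n) (s : Fin S) (b : Fin (A i)) :
    -(g.Rmax / (1 - g.γ)) ≤ g.adv π i s b := by
  have hdev := isProfile_devProfile hπ i s b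
  have hbell : 0 ≤ g.bellman (devProfile π i s b) i (g.V π i) s :=
    add_nonneg (g.rvec_nonneg hdev i s) (mul_nonneg g.γ_nonneg
      (nonneg_mulVec_of_mem_rowStochastic (g.Pmat_mem_rowStochastic hdev) (g.V_nonneg hπ i) s))
  rw [adv]
  linarith [g.V_le hπ i s]

lemma D_nonneg (π : Profile n S A) (i : Fin n) (s : Fin S) (b : Fin (A i)) : 0 ≤ g.D π i s b :=
  le_max_left _ _

lemma D_le (hπ : IsProfile π) (i : Fin n) (s : Fin S) (b : Fin (A i)) :
    g.D π i s b ≤ g.Rmax / (1 - g.γ) := by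
  have hV₀ : 0 ≤ g.V π i s := g.V_nonneg hπ i s
  have hdev : g.Vdev π i s b ≤ g.Rmax / (1 - g.γ) := g.V_le (isProfile_devProfile hπ i s b) i s
  exact max_le (hV₀.trans (g.V_le hπ i s)) (by linarith)

lemma D_mul_one_sub_le (hπ : IsProfile π) (i : Fin n) (s : Fin S) (b : Fin (A i)) :
    g.D π i s b * (1 - g.γ) ≤ max 0 (g.adv π i s b) := by
  have hbell : ∀ t, g.bellman (devProfile π i s b) i (g.V π i) t
      ≤ g.V π i t + max 0 (g.adv π i s b) := by
    intro t
    rcases eq_or_ne t s with rfl | hts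
    · exact sub_le_iff_le_add'.1 (le_max_right _ _)
    · rw [g.bellman_devProfile_of_ne π i _ hts, g.bellman_V hπ]
      exact le_add_of_nonneg_right (le_max_left _ _)
  have hV := g.V_le_add_div_of_bellman_le (isProfile_devProfile hπ i s b) hbell s
  rw [← le_div_iff₀ g.one_sub_γ_pos]
  exact max_le (div_nonneg (le_max_left _ _) g.one_sub_γ_pos.le) (sub_le_iff_le_add'.2 hV)

lemma adv_le_D (hπ : IsProfile π) (i : Fin n) (s : Fin S) (b : Fin (A i)) :
    g.adv π i s b ≤ g.D π i s b := by
  rcases le_total (g.adv π i s b) 0 with hadv | hadv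
  · exact hadv.trans (g.D_nonneg π i s b)
  have hdev := isProfile_devProfile hπ i s b
  have hV : g.V π i ≤ g.V (devProfile π i s b) i := by
    refine g.le_V_of_le_bellman hdev fun t ↦ ?_
    rcases eq_or_ne t s with rfl | hts
    · exact sub_nonneg.1 hadv
    · rw [g.bellman_devProfile_of_ne π i _ hts, g.bellman_V hπ]
  have hnext : 0 ≤ g.γ * (g.Pmat (devProfile π i s b) *ᵥ
      (g.V (devProfile π i s b) i - g.V π i)) s :=
    mul_nonneg g.γ_nonneg (nonneg_mulVec_of_mem_rowStochastic
      (g.Pmat_mem_rowStochastic hdev) (sub_nonneg.2 hV) s)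
  calc g.adv π i s b ≤ g.Vdev π i s b - g.V π i s := by
        rw [Vdev, g.V_sub_eq hdev]
        exact le_add_of_nonneg_left hnext
    _ ≤ g.D π i s b := le_max_right _ _

lemma V_update_le_of_D_le {c : ℝ} (hπ : IsProfile π) (hσ : ∀ t, σ t ∈ stdSimplex ℝ (Fin (A i)))
    (hD : ∀ s b, g.D π i s b ≤ c) (s : Fin S) :
    g.V (Function.update π i σ) i s ≤ g.V π i s + c / (1 - g.γ) := by
  refine g.V_le_add_div_of_bellman_le (isProfile_update hπ hσ) (fun t ↦ ?_) s
  rw [bellman_update_eq_sum_devProfile]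
  exact sum_mul_le_of_mem_stdSimplex (hσ t) fun b ↦
    sub_le_iff_le_add'.1 ((g.adv_le_D hπ i t b).trans (hD t b))

lemma abs_D_sub_le_of_abs_f_sub_le {δ : ℝ} {s : Fin S} {b : Fin (A i)} (hπ : IsProfile π)
    (h : |g.f π i s b - π i s b| ≤ δ) :
    |g.D π i s b - π i s b * ∑ c, g.D π i s c| ≤ (1 + A i * (g.Rmax / (1 - g.γ))) * δ := by
  have hsum : ∑ c, g.D π i s c ≤ A i * (g.Rmax / (1 - g.γ)) := by
    simpa using Finset.sum_le_card_nsmul univ _ _ fun c _ ↦ g.D_le hπ i s c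
  have hsum₀ : 0 ≤ ∑ c, g.D π i s c := Finset.sum_nonneg fun c _ ↦ g.D_nonneg π i s c
  refine (abs_sub_mul_le_of_abs_div_sub_le hsum₀ h).trans ?_
  exact mul_le_mul_of_nonneg_right (by linarith) ((abs_nonneg _).trans h)

lemma D_le_of_abs_D_sub_le {e : ℝ} {s : Fin S} (hπ : IsProfile π)
    (h : ∀ b, |g.D π i s b - π i s b * ∑ c, g.D π i s c| ≤ e) (b : Fin (A i)) :
    g.D π i s b ≤ A i * (e + √(g.Rmax * e) / (1 - g.γ)) := by
  have he : 0 ≤ e := (abs_nonneg _).trans (h b)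
  have hK : 0 ≤ g.Rmax / (1 - g.γ) := (g.V_nonneg hπ i s).trans (g.V_le hπ i s)
  have hsqrt : √(g.Rmax / (1 - g.γ) * e / (1 - g.γ)) = √(g.Rmax * e) / (1 - g.γ) := by
    rw [div_mul_eq_mul_div, div_div, ← sq, Real.sqrt_div' _ (sq_nonneg _),
      Real.sqrt_sq g.one_sub_γ_pos.le]
  calc g.D π i s b ≤ ∑ c, g.D π i s c :=
        Finset.single_le_sum (fun c _ ↦ g.D_nonneg π i s c) (Finset.mem_univ b)
    _ ≤ A i * (e + √(g.Rmax * e) / (1 - g.γ)) := by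
        simpa only [Fintype.card_fin, hsqrt] using
          sum_le_of_abs_sub_mul_sum_le g.one_sub_γ_pos hK he (hπ.1 i s)
            (g.sum_mul_adv_eq_zero hπ i s) (g.neg_le_adv hπ i s) (g.D_nonneg π i s)
            (g.D_mul_one_sub_le hπ i s) h

theorem V_update_le_of_abs_f_sub_le {δ e : ℝ} (hπ : IsProfile π)
    (hδ : ∀ s b, |g.f π i s b - π i s b| ≤ δ) (he : (1 + A i * (g.Rmax / (1 - g.γ))) * δ ≤ e)
    (hσ : ∀ t, σ t ∈ stdSimplex ℝ (Fin (A i))) (s : Fin S) :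
    g.V (Function.update π i σ) i s
      ≤ g.V π i s + A i * (e + √(g.Rmax * e) / (1 - g.γ)) / (1 - g.γ) :=
  g.V_update_le_of_D_le hπ hσ (fun t ↦ g.D_le_of_abs_D_sub_le hπ fun b ↦
    (g.abs_D_sub_le_of_abs_f_sub_le hπ (hδ t b)).trans he) s

end SG

section Constants

/- With `u = 1 - γ` and at most `N` actions, a displacement of `u⁵ / (32 N³ R³ L²)` under `f` makes
`|D b - π b * ∑ D|` at most `u⁴ / (16 N² R² L²)`, which in turn bounds the regret by `1 / L` as
long as `u ≤ R L`. -/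
variable {u R N L : ℝ}

lemma one_add_mul_div_le (hu₀ : 0 < u) (hu₁ : u ≤ 1) (hR : 1 ≤ R) (hN : 1 ≤ N) (hL : 0 < L) :
    (1 + N * (R / u)) * (u ^ 5 / (32 * N ^ 3 * R ^ 3 * L ^ 2))
      ≤ u ^ 4 / (16 * N ^ 2 * R ^ 2 * L ^ 2) := by
  have hNR : 1 ≤ N * (R / u) :=
    one_le_mul_of_one_le_of_one_le hN ((one_le_div hu₀).2 (hu₁.trans hR))
  calc (1 + N * (R / u)) * (u ^ 5 / (32 * N ^ 3 * R ^ 3 * L ^ 2))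
      ≤ 2 * (N * (R / u)) * (u ^ 5 / (32 * N ^ 3 * R ^ 3 * L ^ 2)) :=
        mul_le_mul_of_nonneg_right (by linarith) (by positivity)
    _ = u ^ 4 / (16 * N ^ 2 * R ^ 2 * L ^ 2) := by
        field_simp
        norm_num

lemma mul_add_sqrt_div_le (hu₀ : 0 < u) (hu₁ : u ≤ 1) (hR : 1 ≤ R) (hN : 1 ≤ N) (hL : 0 < L)
    (hRL : u ≤ R * L) :
    N * (u ^ 4 / (16 * N ^ 2 * R ^ 2 * L ^ 2)
      + √(R * (u ^ 4 / (16 * N ^ 2 * R ^ 2 * L ^ 2))) / u) / u ≤ 1 / L := by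
  have hsqrt : √(R * (u ^ 4 / (16 * N ^ 2 * R ^ 2 * L ^ 2))) ≤ u ^ 2 / (4 * N * L) := by
    refine (Real.sqrt_le_left (by positivity)).2 ?_
    calc R * (u ^ 4 / (16 * N ^ 2 * R ^ 2 * L ^ 2))
        = (u ^ 2 / (4 * N * L)) ^ 2 / R := by
          field_simp
          norm_num
      _ ≤ (u ^ 2 / (4 * N * L)) ^ 2 := div_le_self (by positivity) hR
  have hlin : u ^ 3 / (16 * N * R ^ 2 * L) ≤ 1 / 16 := by
    have hu : u ^ 3 ≤ N * R * (R * L) :=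
      calc u ^ 3 ≤ u := pow_le_of_le_one hu₀.le hu₁ three_ne_zero
        _ ≤ R * L := hRL
        _ ≤ N * R * (R * L) :=
          le_mul_of_one_le_left (by positivity) (one_le_mul_of_one_le_of_one_le hN hR)
    rw [div_le_iff₀ (by positivity)]
    linarith
  calc N * (u ^ 4 / (16 * N ^ 2 * R ^ 2 * L ^ 2)
        + √(R * (u ^ 4 / (16 * N ^ 2 * R ^ 2 * L ^ 2))) / u) / u
      ≤ N * (u ^ 4 / (16 * N ^ 2 * R ^ 2 * L ^ 2) + u ^ 2 / (4 * N * L) / u) / u := by gcongr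
    _ = (u ^ 3 / (16 * N * R ^ 2 * L) + 1 / 4) * (1 / L) := by
        field_simp
    _ ≤ 1 / L := mul_le_of_le_one_left (by positivity) (by linarith)

end Constants

open SG in
theorem isApproxMPE_of_choice_of_d_general {n S : ℕ} {A : Fin n → ℕ} (g : SG n S A)
    (L : ℝ) (hL : 0 < L) (hR : 1 ≤ g.Rmax) (π : Profile n S A) (hπ : IsProfile π)
    (hfix : ∀ i s a, |g.f π i s a - π i s a| ≤
      (1 - g.γ) ^ 5 / (32 * (Amax A : ℝ) ^ 3 * g.Rmax ^ 3 * L ^ 2)) :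
    g.IsApproxMPE π (1 / L) := by
  intro s i σ hσ
  have hσ' : ∀ t, σ t ∈ stdSimplex ℝ (Fin (A i)) := fun t ↦ ⟨hσ.1 t, hσ.2 t⟩
  have hu₀ := g.one_sub_γ_pos
  have hu₁ : 1 - g.γ ≤ 1 := sub_le_self _ g.γ_nonneg
  rw [sub_le_iff_le_add]
  rcases le_total (1 - g.γ) (g.Rmax * L) with hRL | hRL
  · have hAi : (1 : ℝ) ≤ A i := by
      obtain ⟨b, -⟩ := Finset.nonempty_of_sum_ne_zero ((hσ.2 s).trans_ne one_ne_zero)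
      exact_mod_cast b.pos
    have hAmax : (A i : ℝ) ≤ Amax A := by exact_mod_cast Finset.le_sup (Finset.mem_univ i)
    have hδ : ∀ t b, |g.f π i t b - π i t b| ≤
        (1 - g.γ) ^ 5 / (32 * (A i : ℝ) ^ 3 * g.Rmax ^ 3 * L ^ 2) :=
      fun t b ↦ (hfix i t b).trans (by gcongr)
    exact (g.V_update_le_of_abs_f_sub_le hπ hδ
      (one_add_mul_div_le hu₀ hu₁ hR hAi hL) hσ' s).trans
      (add_le_add_right (mul_add_sqrt_div_le hu₀ hu₁ hR hAi hL hRL) _)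
  · -- Here the tolerance `1 / L` is at least the largest possible value `Rmax / (1 - γ)`.
    have hV₀ : 0 ≤ g.V π i s := g.V_nonneg hπ i s
    have htol : g.Rmax / (1 - g.γ) ≤ 1 / L := (div_le_div_iff₀ hu₀ hL).2 (by linarith)
    linarith [g.V_le (isProfile_update hπ hσ') i s]

open SG in
/-- with `L ≥ 1`, `R_max ≥ 1`, `A_max ≥ 1`, any
`(1−γ)⁵/(32A_max³R_max³L²)`-approximate fixed point of `f` is a `1/L`-approximate MPE. -/
theorem isApproxMPE_of_choice_of_d {n S : ℕ} {A : Fin n → ℕ} (g : SG n S A)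
    (L : ℝ) (hL : 1 ≤ L) (hR : 1 ≤ g.Rmax) (hA : 1 ≤ (Amax A : ℝ))
    (π : Profile n S A) (hπ : IsProfile π)
    (hfix : ∀ i s a, |g.f π i s a - π i s a| ≤
      (1 - g.γ) ^ 5 / (32 * (Amax A : ℝ) ^ 3 * g.Rmax ^ 3 * L ^ 2)) :
    g.IsApproxMPE π (1 / L) :=
  isApproxMPE_of_choice_of_d_general g L (one_pos.trans_le hL) hR π hπ hfix
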